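/- Let m ≥ 3 and let γ : I → ℝ^m be a C^∞ curve on an open interval I. If γ'(t₀), γ''(t₀), γ'''(t₀) are linearly independent, then the tangent surface f(t,s) = γ(t) + s γ'(t) is, as a germ at (t₀, 0) ∈ I × ℝ, diffeomorphic to the cuspidal edge (u,w) ↦ (u, w², w³, 0, …, 0) : ℝ² → ℝ^m. -/

import Mathlib

open Set

noncomputable section

/-- `σ` is a `C^∞` diffeomorphism from the open set `U` onto its open image. -/
def SmoothDiffeoOn {E F : Type*} [NormedAddCommGroup E] [NormedSpace ℝ E]
    [NormedAddCommGroup F] [NormedSpace ℝ F] (σ : E → F) (U : Set E) : Prop :=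
  IsOpen U ∧ IsOpen (σ '' U) ∧ ContDiffOn ℝ (⊤ : ℕ∞) σ U ∧
    ∃ σinv : F → E, ContDiffOn ℝ (⊤ : ℕ∞) σinv (σ '' U) ∧ ∀ x ∈ U, σinv (σ x) = x

/-- The map-germ of `f` at `p` is diffeomorphic to the map-germ of `g` at `q`:
there are open neighborhoods `U ∋ p`, `V ∋ f p` and `C^∞` diffeomorphisms
`σ` from `U` onto an open neighborhood of `q`, `τ` from `V` onto an open
neighborhood of `g q`, with `σ p = q`, `τ (f p) = g q`, `f(U) ⊆ V` and
`τ ∘ f = g ∘ σ` on `U`. -/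
def GermDiffeomorphic {E F : Type*} [NormedAddCommGroup E] [NormedSpace ℝ E]
    [NormedAddCommGroup F] [NormedSpace ℝ F]
    (f : E → F) (p : E) (g : E → F) (q : E) : Prop :=
  ∃ (U : Set E) (V : Set F) (σ : E → E) (τ : F → F),
    SmoothDiffeoOn σ U ∧ SmoothDiffeoOn τ V ∧
    p ∈ U ∧ f p ∈ V ∧ σ p = q ∧ τ (f p) = g q ∧
    (∀ x ∈ U, f x ∈ V) ∧ ∀ x ∈ U, τ (f x) = g (σ x)

/-!
By Whitney's theorem on even functions `γ (x + s) = A (x, s²) + s B (x, s²)` with smooth `A`, `B`.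
For compactly supported `γ` this follows from Fourier inversion and the expansion
`exp (i ξ (x + s)) = exp (i ξ x) (cos (ξ s) + i sin (ξ s))`, because `cos w = C (w²)` and
`sin w = w S (w²)` for smooth functions `C` and `S` all of whose derivatives are bounded. In the
coordinates `x = t + s` the tangent surface thus becomes `E (x, s²) + s³ O (x, s²)`, and `∂E/∂x`,
`∂E/∂y`, `O` take at `(t₀, 0)` the values `γ' t₀`, `-γ'' t₀ / 2`, `γ''' t₀ / 3`. When these are
linearly independent, the inverse function theorem makes the map
`(u, v, w) ↦ E (t₀ + u, v) + w O (t₀ + u, v)` part of a local diffeomorphism of the target, which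
carries the cuspidal edge to the surface.
-/

open Filter Topology MeasureTheory
open scoped ContDiff SchwartzMap

/-- `K` is smooth and each of its derivatives is bounded, so that integrals
`∫ K (ξ ^ 2 * y) • ψ ξ` against a Schwartz function `ψ` may be differentiated in `y`
under the integral sign arbitrarily often. -/
structure HasBoundedDerivs (K : ℝ → ℝ) : Prop where
  contDiff : ContDiff ℝ ∞ K
  exists_abs_iteratedDeriv_le (n : ℕ) : ∃ M, ∀ y, |iteratedDeriv n K y| ≤ M

namespace HasBoundedDerivs

variable {K : ℝ → ℝ}

theorem exists_abs_le (hK : HasBoundedDerivs K) : ∃ M, ∀ y, |K y| ≤ M := by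
  simpa only [iteratedDeriv_zero] using hK.exists_abs_iteratedDeriv_le 0

protected theorem deriv (hK : HasBoundedDerivs K) : HasBoundedDerivs (deriv K) where
  contDiff := (contDiff_infty_iff_deriv.1 hK.contDiff).2
  exists_abs_iteratedDeriv_le n := by
    simpa only [iteratedDeriv_succ'] using hK.exists_abs_iteratedDeriv_le (n + 1)

theorem const_mul (hK : HasBoundedDerivs K) (c : ℝ) : HasBoundedDerivs fun y => c * K y where
  contDiff := contDiff_const.mul hK.contDiff
  exists_abs_iteratedDeriv_le n := by
    obtain ⟨M, hM⟩ := hK.exists_abs_iteratedDeriv_le n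
    refine ⟨|c| * M, fun y => ?_⟩
    rw [iteratedDeriv_const_mul_field, abs_mul]
    exact mul_le_mul_of_nonneg_left (hM y) (abs_nonneg c)

theorem of_eq_zero_of_le {a b : ℝ} (hK : ContDiff ℝ ∞ K) (hzero : ∀ y ≤ a, K y = 0)
    (hbound : ∀ n, ∃ M, ∀ y ≥ b, |iteratedDeriv n K y| ≤ M) : HasBoundedDerivs K where
  contDiff := hK
  exists_abs_iteratedDeriv_le n := by
    obtain ⟨M, hM⟩ := isCompact_Icc.exists_bound_of_continuousOn (s := Icc a b)
      (hK.continuous_iteratedDeriv n (by exact_mod_cast le_top)).continuousOn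
    obtain ⟨N, hN⟩ := hbound n
    have hN0 : 0 ≤ N := (abs_nonneg _).trans (hN b le_rfl)
    refine ⟨max M N, fun y => ?_⟩
    rcases lt_or_ge y a with hya | hya
    · have hlocal : K =ᶠ[𝓝 y] fun _ => 0 := by
        filter_upwards [gt_mem_nhds hya] with z hz using hzero z hz.le
      rw [hlocal.iteratedDeriv_eq, iteratedDeriv_fun_const_zero, abs_zero]
      exact le_max_of_le_right hN0
    rcases le_total y b with hyb | hyb
    · exact le_max_of_le_left (hM y ⟨hya, hyb⟩)
    · exact le_max_of_le_right (hN y hyb)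

end HasBoundedDerivs

theorem exists_contDiff_comp_sq_eq_cos :
    ∃ C : ℝ → ℝ, ContDiff ℝ ∞ C ∧ ∀ w, C (w ^ 2) = Real.cos w := by
  let c : ℕ → ℝ := fun n => (-1) ^ n / (2 * n).factorial
  have hradius : (FormalMultilinearSeries.ofScalars ℝ c).radius = ⊤ := by
    refine FormalMultilinearSeries.radius_eq_top_of_summable_norm _ fun r => ?_
    convert (Real.hasSum_cosh (√r)).summable using 2 with n
    rw [FormalMultilinearSeries.ofScalars_norm, pow_mul, Real.sq_sqrt r.coe_nonneg]
    simp [c, div_eq_inv_mul]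
  have hseries := (FormalMultilinearSeries.ofScalars ℝ c).hasFPowerSeriesOnBall (by simp [hradius])
  rw [hradius] at hseries
  refine ⟨(FormalMultilinearSeries.ofScalars ℝ c).sum, ?_, fun w => ?_⟩
  · rw [← contDiffOn_univ]
    simpa using hseries.analyticOnNhd.contDiffOn (n := ∞) (by simp [uniqueDiffOn_univ])
  · have hsum := hseries.hasSum (y := w ^ 2) (by simp)
    rw [zero_add] at hsum
    refine hsum.unique ?_
    convert! Real.hasSum_cos w using 2 with n
    simp only [FormalMultilinearSeries.apply_eq_prod_smul_coeff, Finset.prod_const,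
      Finset.card_univ, Fintype.card_fin, ← pow_mul, FormalMultilinearSeries.coeff_ofScalars,
      smul_eq_mul, c]
    ring

theorem hasDerivAt_comp_sq {V : Type*} [NormedAddCommGroup V] [NormedSpace ℝ V] {f : ℝ → V}
    {s : ℝ} (hf : DifferentiableAt ℝ f (s ^ 2)) :
    HasDerivAt (fun s => f (s ^ 2)) ((2 * s) • deriv f (s ^ 2)) s := by
  simpa [Function.comp_def] using
    hf.hasDerivAt.scomp (h := fun s => s ^ 2) s (hasDerivAt_pow 2 s)

section CosineKernel

variable {C : ℝ → ℝ}

theorem two_mul_mul_deriv_sq_eq_neg_sin (hC : Differentiable ℝ C)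
    (hcos : ∀ w, C (w ^ 2) = Real.cos w) (w : ℝ) :
    2 * w * deriv C (w ^ 2) = -Real.sin w := by
  have hchain := hasDerivAt_comp_sq (hC (w ^ 2))
  simp_rw [hcos] at hchain
  exact hchain.unique (Real.hasDerivAt_cos w)

theorem cosKernel_ode (hC : ContDiff ℝ ∞ C) (hcos : ∀ w, C (w ^ 2) = Real.cos w) {y : ℝ}
    (hy : 0 < y) : 4 * y * deriv (deriv C) y + 2 * deriv C y + C y = 0 := by
  obtain ⟨w, rfl⟩ : ∃ w, y = w ^ 2 := ⟨√y, (Real.sq_sqrt hy.le).symm⟩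
  have hC' : Differentiable ℝ (deriv C) :=
    (contDiff_infty_iff_deriv.1 hC).2.differentiable (by simp)
  have hleft := ((hasDerivAt_id w).const_mul 2).mul (hasDerivAt_comp_sq (hC' (w ^ 2)))
  have hfun : ((fun w => 2 * id w) * fun w => deriv C (w ^ 2)) = fun w => -Real.sin w :=
    funext (two_mul_mul_deriv_sq_eq_neg_sin (hC.differentiable (by simp)) hcos)
  rw [hfun] at hleft
  have hsecond := hleft.unique (Real.hasDerivAt_sin w).neg
  simp only [id, smul_eq_mul] at hsecond
  linarith [hcos w]

theorem cosKernel_ode_iteratedDeriv (hC : ContDiff ℝ ∞ C) (hcos : ∀ w, C (w ^ 2) = Real.cos w)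
    (n : ℕ) {y : ℝ} (hy : 0 < y) :
    4 * y * iteratedDeriv (n + 2) C y + (4 * n + 2) * iteratedDeriv (n + 1) C y
      + iteratedDeriv n C y = 0 := by
  induction n generalizing y with
  | zero =>
    simpa [iteratedDeriv_succ] using cosKernel_ode hC hcos hy
  | succ n ih =>
    have hderiv (k : ℕ) : HasDerivAt (iteratedDeriv k C) (iteratedDeriv (k + 1) C y) y := by
      rw [iteratedDeriv_succ]
      have hlt : (k : WithTop ℕ∞) < ∞ := by exact_mod_cast WithTop.coe_lt_top k
      exact (hC.differentiable_iteratedDeriv k hlt y).hasDerivAt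
    have hleft := ((((hasDerivAt_id y).const_mul 4).mul (hderiv (n + 2))).add
      ((hderiv (n + 1)).const_mul (4 * n + 2 : ℝ))).add (hderiv n)
    have hzero := (hasDerivAt_const y (0 : ℝ)).congr_of_eventuallyEq
      ((lt_mem_nhds hy).mono fun z hz => ih hz)
    have hsum := hleft.unique hzero
    simp only [id] at hsum
    push_cast
    linarith

theorem exists_abs_iteratedDeriv_cosKernel_le (hC : ContDiff ℝ ∞ C)
    (hcos : ∀ w, C (w ^ 2) = Real.cos w) (n : ℕ) :
    ∃ M, ∀ y ≥ 1, |iteratedDeriv n C y| ≤ M := by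
  induction n using Nat.twoStepInduction with
  | zero =>
    refine ⟨1, fun y hy => ?_⟩
    rw [iteratedDeriv_zero, ← Real.sq_sqrt (by linarith : 0 ≤ y), hcos]
    exact Real.abs_cos_le_one _
  | one =>
    refine ⟨1, fun y hy => ?_⟩
    have hsin := two_mul_mul_deriv_sq_eq_neg_sin (hC.differentiable (by simp)) hcos (√y)
    rw [Real.sq_sqrt (by linarith)] at hsin
    have hle : |2 * √y * deriv C y| ≤ 1 := by
      rw [hsin, abs_neg]
      exact Real.abs_sin_le_one _
    rw [abs_mul, abs_of_nonneg (by positivity)] at hle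
    rw [iteratedDeriv_one]
    nlinarith [abs_nonneg (deriv C y), Real.one_le_sqrt.2 hy]
  | more n ih₀ ih₁ =>
    obtain ⟨M, hM⟩ := ih₀
    obtain ⟨N, hN⟩ := ih₁
    refine ⟨(4 * n + 2) * N + M, fun y hy => ?_⟩
    have hode := cosKernel_ode_iteratedDeriv hC hcos n (by linarith : 0 < y)
    calc |iteratedDeriv (n + 2) C y|
        ≤ 4 * y * |iteratedDeriv (n + 2) C y| := le_mul_of_one_le_left (abs_nonneg _) (by linarith)
      _ = |4 * y * iteratedDeriv (n + 2) C y| := by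
        rw [abs_mul, abs_of_nonneg (by linarith : 0 ≤ 4 * y)]
      _ = |(4 * n + 2) * iteratedDeriv (n + 1) C y + iteratedDeriv n C y| := by
        rw [← abs_neg]
        congr 1
        linarith
      _ ≤ (4 * n + 2) * |iteratedDeriv (n + 1) C y| + |iteratedDeriv n C y| := by
        refine (abs_add_le _ _).trans_eq ?_
        rw [abs_mul, abs_of_nonneg (by positivity : (0 : ℝ) ≤ 4 * n + 2)]
      _ ≤ (4 * n + 2) * N + M := by
        gcongr
        exacts [hN y hy, hM y hy]

theorem exists_hasBoundedDerivs_cos_sin :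
    ∃ C S : ℝ → ℝ, HasBoundedDerivs C ∧ HasBoundedDerivs S ∧
      (∀ w, Real.cos w = C (w ^ 2)) ∧ ∀ w, Real.sin w = w * S (w ^ 2) := by
  obtain ⟨C₀, hC₀, hcos₀⟩ := exists_contDiff_comp_sq_eq_cos
  -- The cut-off on `y ≤ 0` removes the exponential growth `C₀ (-w ^ 2) = cosh w`.
  let C : ℝ → ℝ := fun y => C₀ y * Real.smoothTransition (y + 1)
  have hC : ContDiff ℝ ∞ C :=
    hC₀.mul (Real.smoothTransition.contDiff.comp (contDiff_id.add contDiff_const))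
  have hcos (w : ℝ) : C (w ^ 2) = Real.cos w := by
    simp only [C]
    rw [hcos₀, Real.smoothTransition.one_of_one_le (by nlinarith [sq_nonneg w]), mul_one]
  have hzero : ∀ y ≤ -1, C y = 0 := fun y hy => by
    simp only [C]
    rw [Real.smoothTransition.zero_of_nonpos (by linarith), mul_zero]
  have hbounded : HasBoundedDerivs C :=
    .of_eq_zero_of_le hC hzero (exists_abs_iteratedDeriv_cosKernel_le hC hcos)
  refine ⟨C, fun y => -2 * deriv C y, hbounded, hbounded.deriv.const_mul _,
    fun w => (hcos w).symm, fun w => ?_⟩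
  linarith [two_mul_mul_deriv_sq_eq_neg_sin (hC.differentiable (by simp)) hcos w]

end CosineKernel

section OscillatoryIntegral

variable {W : Type*} [NormedAddCommGroup W] [NormedSpace ℂ W] {K : ℝ → ℝ}

/-- `exp (i ξ x) K (ξ² y)` at `p = (x, y)`. For `K (w ^ 2) = cos w` and `y = s²` it is the part of
`exp (i ξ (x + s))` that is even in `s`. -/
def oscillatoryKernel (K : ℝ → ℝ) (p : ℝ × ℝ) (ξ : ℝ) : ℂ :=
  Complex.exp (↑(ξ * p.1) * Complex.I) * K (ξ ^ 2 * p.2)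

/-- The superposition over all frequencies `ξ` of the oscillatory kernels of `K`, with amplitude
`ψ`, as a function of `(x, y)`. -/
def oscillatoryIntegral (K : ℝ → ℝ) (ψ : 𝓢(ℝ, W)) (p : ℝ × ℝ) : W :=
  ∫ ξ, oscillatoryKernel K p ξ • ψ ξ

theorem norm_oscillatoryKernel (K : ℝ → ℝ) (p : ℝ × ℝ) (ξ : ℝ) :
    ‖oscillatoryKernel K p ξ‖ = |K (ξ ^ 2 * p.2)| := by
  rw [oscillatoryKernel, norm_mul, Complex.norm_exp_ofReal_mul_I, one_mul, Complex.norm_real,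
    Real.norm_eq_abs]

theorem continuous_oscillatoryKernel (hK : Continuous K) (p : ℝ × ℝ) :
    Continuous (oscillatoryKernel K p) := by
  unfold oscillatoryKernel
  fun_prop

theorem integrable_oscillatoryKernel_smul (hK : HasBoundedDerivs K) (ψ : 𝓢(ℝ, W)) (p : ℝ × ℝ) :
    Integrable fun ξ => oscillatoryKernel K p ξ • ψ ξ := by
  obtain ⟨M, hM⟩ := hK.exists_abs_le
  refine ψ.integrable.bdd_smul M
    (continuous_oscillatoryKernel hK.contDiff.continuous p).aestronglyMeasurable
    (.of_forall fun ξ => ?_)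
  rw [norm_oscillatoryKernel]
  exact hM _

theorem hasFDerivAt_oscillatoryKernel (hK : Differentiable ℝ K) (ξ : ℝ) (p : ℝ × ℝ) :
    HasFDerivAt (oscillatoryKernel K · ξ)
      ((ContinuousLinearMap.fst ℝ ℝ ℝ).smulRight (oscillatoryKernel K p ξ * (ξ * Complex.I)) +
        (ContinuousLinearMap.snd ℝ ℝ ℝ).smulRight (oscillatoryKernel (deriv K) p ξ * ξ ^ 2)) p := by
  have hexp : HasFDerivAt (fun p : ℝ × ℝ => Complex.exp (↑(ξ * p.1) * Complex.I)) _ p :=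
    ((Complex.ofRealCLM.hasFDerivAt.comp p (hasFDerivAt_fst.const_mul ξ)).mul_const Complex.I).cexp
  have hK' : HasFDerivAt (fun p : ℝ × ℝ => (K (ξ ^ 2 * p.2) : ℂ)) _ p :=
    Complex.ofRealCLM.hasFDerivAt.comp p
      ((hK _).hasDerivAt.comp_hasFDerivAt p (hasFDerivAt_snd.const_mul (ξ ^ 2)))
  refine (hexp.mul hK').congr_fderiv ?_
  ext <;> simp [oscillatoryKernel] <;> ring

/-- Multiplication by `i ξ` on Schwartz functions, the Fourier-side form of differentiation. -/
def frequencySMul : 𝓢(ℝ, W) →L[ℂ] 𝓢(ℝ, W) :=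
  SchwartzMap.smulLeftCLM W fun ξ : ℝ => (ξ * Complex.I : ℂ)

theorem frequencySMul_apply (ψ : 𝓢(ℝ, W)) (ξ : ℝ) :
    frequencySMul ψ ξ = (ξ * Complex.I : ℂ) • ψ ξ :=
  SchwartzMap.smulLeftCLM_apply_apply (by fun_prop) ψ ξ

theorem neg_frequencySMul_frequencySMul_apply (ψ : 𝓢(ℝ, W)) (ξ : ℝ) :
    (-frequencySMul (frequencySMul ψ)) ξ = (ξ ^ 2 : ℂ) • ψ ξ := by
  rw [neg_apply, frequencySMul_apply, frequencySMul_apply, smul_smul, ← neg_smul]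
  congr 1
  linear_combination -(ξ : ℂ) ^ 2 * Complex.I_sq

theorem hasFDerivAt_oscillatoryKernel_smul (hK : Differentiable ℝ K) (ψ : 𝓢(ℝ, W)) (ξ : ℝ)
    (p : ℝ × ℝ) :
    HasFDerivAt (fun p => oscillatoryKernel K p ξ • ψ ξ)
      ((ContinuousLinearMap.fst ℝ ℝ ℝ).smulRight (oscillatoryKernel K p ξ • frequencySMul ψ ξ) +
        (ContinuousLinearMap.snd ℝ ℝ ℝ).smulRight
          (oscillatoryKernel (deriv K) p ξ • (-frequencySMul (frequencySMul ψ)) ξ)) p := by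
  refine ((hasFDerivAt_oscillatoryKernel hK ξ p).smul_const (ψ ξ)).congr_fderiv ?_
  rw [neg_frequencySMul_frequencySMul_apply, frequencySMul_apply]
  ext <;> simp [smul_smul]

variable [CompleteSpace W]

theorem hasFDerivAt_oscillatoryIntegral (hK : HasBoundedDerivs K) (ψ : 𝓢(ℝ, W)) (p : ℝ × ℝ) :
    HasFDerivAt (oscillatoryIntegral K ψ)
      ((ContinuousLinearMap.fst ℝ ℝ ℝ).smulRight (oscillatoryIntegral K (frequencySMul ψ) p) +
        (ContinuousLinearMap.snd ℝ ℝ ℝ).smulRight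
          (oscillatoryIntegral (deriv K) (-frequencySMul (frequencySMul ψ)) p)) p := by
  set ψ₁ := frequencySMul ψ
  set ψ₂ := -frequencySMul (frequencySMul ψ)
  obtain ⟨M, hM⟩ := hK.exists_abs_le
  obtain ⟨M', hM'⟩ := hK.deriv.exists_abs_le
  let dx : W →L[ℝ] ℝ × ℝ →L[ℝ] W :=
    ContinuousLinearMap.smulRightL ℝ (ℝ × ℝ) W (ContinuousLinearMap.fst ℝ ℝ ℝ)
  let dy : W →L[ℝ] ℝ × ℝ →L[ℝ] W :=
    ContinuousLinearMap.smulRightL ℝ (ℝ × ℝ) W (ContinuousLinearMap.snd ℝ ℝ ℝ)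
  let F' : ℝ × ℝ → ℝ → ℝ × ℝ →L[ℝ] W := fun q ξ =>
    dx (oscillatoryKernel K q ξ • ψ₁ ξ) + dy (oscillatoryKernel (deriv K) q ξ • ψ₂ ξ)
  have hint₁ := integrable_oscillatoryKernel_smul hK ψ₁ p
  have hint₂ := integrable_oscillatoryKernel_smul hK.deriv ψ₂ p
  have hintegral : ∫ ξ, F' p ξ =
      dx (oscillatoryIntegral K ψ₁ p) + dy (oscillatoryIntegral (deriv K) ψ₂ p) := by
    rw [integral_add (dx.integrable_comp hint₁) (dy.integrable_comp hint₂),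
      dx.integral_comp_comm hint₁, dy.integral_comp_comm hint₂]
    rfl
  have hbound (ξ : ℝ) (q : ℝ × ℝ) :
      ‖F' q ξ‖ ≤ ‖dx‖ * (M * ‖ψ₁ ξ‖) + ‖dy‖ * (M' * ‖ψ₂ ξ‖) := by
    refine (norm_add_le _ _).trans (add_le_add ?_ ?_)
    all_goals
      refine (ContinuousLinearMap.le_opNorm _ _).trans ?_
      rw [norm_smul, norm_oscillatoryKernel]
      gcongr
    exacts [hM _, hM' _]
  exact hintegral ▸ hasFDerivAt_integral_of_dominated_of_fderiv_le univ_mem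
    (.of_forall fun q => (integrable_oscillatoryKernel_smul hK ψ q).aestronglyMeasurable)
    (integrable_oscillatoryKernel_smul hK ψ p)
    ((dx.integrable_comp hint₁).add (dy.integrable_comp hint₂)).aestronglyMeasurable
    (.of_forall fun ξ q _ => hbound ξ q)
    (((ψ₁.integrable.norm.const_mul M).const_mul _).add
      ((ψ₂.integrable.norm.const_mul M').const_mul _))
    (.of_forall fun ξ q _ =>
      hasFDerivAt_oscillatoryKernel_smul (hK.contDiff.differentiable (by simp)) ψ ξ q)

theorem contDiff_oscillatoryIntegral (hK : HasBoundedDerivs K) (ψ : 𝓢(ℝ, W)) :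
    ContDiff ℝ ∞ (oscillatoryIntegral K ψ) := by
  refine contDiff_infty.2 fun n => ?_
  induction n generalizing K ψ with
  | zero =>
    exact contDiff_zero.2 <| continuous_iff_continuousAt.2 fun p =>
      (hasFDerivAt_oscillatoryIntegral hK ψ p).continuousAt
  | succ n ih =>
    push_cast
    exact contDiff_succ_iff_hasFDerivAt.2 ⟨_,
      (contDiff_const.smulRight (ih hK (frequencySMul ψ))).add
        (contDiff_const.smulRight (ih hK.deriv (-frequencySMul (frequencySMul ψ)))),
      hasFDerivAt_oscillatoryIntegral hK ψ⟩

end OscillatoryIntegral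

section EvenOddSplitting

theorem exists_eq_integral_exp_smul {W : Type*} [NormedAddCommGroup W] [NormedSpace ℂ W]
    [CompleteSpace W] (f : 𝓢(ℝ, W)) :
    ∃ ψ : 𝓢(ℝ, W), ∀ x, f x = ∫ ξ : ℝ, Complex.exp (↑(ξ * x) * Complex.I) • ψ ξ := by
  let dilation : ℝ ≃L[ℝ] ℝ :=
    ContinuousLinearEquiv.smulLeft (Units.mk0 (2 * Real.pi) Real.two_pi_pos.ne')
  let g : 𝓢(ℝ, W) := SchwartzMap.compCLMOfContinuousLinearEquiv ℝ dilation f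
  refine ⟨FourierTransform.fourier g, fun x => ?_⟩
  calc f x = g (x / (2 * Real.pi)) := by
        have hx : dilation (x / (2 * Real.pi)) = x := mul_div_cancel₀ x Real.two_pi_pos.ne'
        rw [SchwartzMap.compCLMOfContinuousLinearEquiv_apply, Function.comp_apply, hx]
    _ = FourierTransformInv.fourierInv (FourierTransform.fourier g) (x / (2 * Real.pi)) := by
        rw [FourierTransform.fourierInv_fourier_eq]
    _ = ∫ ξ : ℝ, Complex.exp (↑(ξ * x) * Complex.I) • FourierTransform.fourier g ξ := by
        rw [SchwartzMap.fourierInv_coe, Real.fourierInv_eq']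
        congr! 5 with ξ
        simp only [RCLike.inner_apply, Real.ringHom_apply, Complex.ofReal_mul, Complex.ofReal_ofNat,
          Complex.ofReal_div]
        field_simp

/-- `γ (x + s)` is split into its parts even and odd in `s`, written smoothly in terms of
`y = s²` as in Whitney's theorem on even functions. Both `A` and `B` take the pair `(x, y)` and are
smooth for all real `y`, although only `y ≥ 0` is constrained. -/
structure IsEvenOddSplitting {V : Type*} [NormedAddCommGroup V] [NormedSpace ℝ V] (γ : ℝ → V)
    (A B : ℝ × ℝ → V) : Prop where
  contDiff_even : ContDiff ℝ ∞ A
  contDiff_odd : ContDiff ℝ ∞ B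
  eq_add (x s : ℝ) : γ (x + s) = A (x, s ^ 2) + s • B (x, s ^ 2)

theorem exp_add_mul_I_eq {C S : ℝ → ℝ} (hcos : ∀ w, Real.cos w = C (w ^ 2))
    (hsin : ∀ w, Real.sin w = w * S (w ^ 2)) (x s ξ : ℝ) :
    Complex.exp (↑(ξ * (x + s)) * Complex.I) = oscillatoryKernel C (x, s ^ 2) ξ +
      s * (oscillatoryKernel S (x, s ^ 2) ξ * (ξ * Complex.I)) := by
  simp only [oscillatoryKernel]
  rw [mul_add, Complex.ofReal_add, add_mul, Complex.exp_add, Complex.exp_mul_I (↑(ξ * s)),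
    ← Complex.ofReal_cos, ← Complex.ofReal_sin, hcos, hsin, mul_pow]
  push_cast
  ring

theorem exists_isEvenOddSplitting_schwartz {W : Type*} [NormedAddCommGroup W] [NormedSpace ℂ W]
    [CompleteSpace W] (f : 𝓢(ℝ, W)) : ∃ A B, IsEvenOddSplitting f A B := by
  obtain ⟨C, S, hC, hS, hcos, hsin⟩ := exists_hasBoundedDerivs_cos_sin
  obtain ⟨ψ, hψ⟩ := exists_eq_integral_exp_smul f
  refine ⟨oscillatoryIntegral C ψ, oscillatoryIntegral S (frequencySMul ψ),
    contDiff_oscillatoryIntegral hC ψ, contDiff_oscillatoryIntegral hS _, fun x s => ?_⟩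
  rw [hψ, oscillatoryIntegral, oscillatoryIntegral, ← integral_smul, ← integral_add
    (integrable_oscillatoryKernel_smul hC ψ _)
    ((integrable_oscillatoryKernel_smul hS _ _).fun_smul s)]
  congr! 2 with ξ
  rw [exp_add_mul_I_eq hcos hsin, frequencySMul_apply, add_smul, mul_smul, mul_smul,
    Complex.coe_smul]

namespace IsEvenOddSplitting

variable {V V' : Type*} [NormedAddCommGroup V] [NormedSpace ℝ V] [NormedAddCommGroup V']
  [NormedSpace ℝ V'] {γ : ℝ → V} {A B : ℝ × ℝ → V}

theorem clm_comp (h : IsEvenOddSplitting γ A B) (L : V →L[ℝ] V') :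
    IsEvenOddSplitting (L ∘ γ) (L ∘ A) (L ∘ B) where
  contDiff_even := L.contDiff.comp h.contDiff_even
  contDiff_odd := L.contDiff.comp h.contDiff_odd
  eq_add x s := by simp [h.eq_add]

theorem sum {ι : Type*} [Fintype ι] {γ : ι → ℝ → V} {A B : ι → ℝ × ℝ → V}
    (h : ∀ i, IsEvenOddSplitting (γ i) (A i) (B i)) :
    IsEvenOddSplitting (fun x => ∑ i, γ i x) (fun p => ∑ i, A i p) (fun p => ∑ i, B i p) where
  contDiff_even := .sum fun i _ => (h i).contDiff_even
  contDiff_odd := .sum fun i _ => (h i).contDiff_odd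
  eq_add x s := by simp [(h _).eq_add, Finset.sum_add_distrib, Finset.smul_sum]

end IsEvenOddSplitting

theorem exists_isEvenOddSplitting_real {f : ℝ → ℝ} (hf : ContDiff ℝ ∞ f)
    (hsupp : HasCompactSupport f) : ∃ A B, IsEvenOddSplitting f A B := by
  have hsupp' : HasCompactSupport (Complex.ofReal ∘ f) := hsupp.comp_left (by simp)
  obtain ⟨A, B, h⟩ := exists_isEvenOddSplitting_schwartz
    (hsupp'.toSchwartzMap (Complex.ofRealCLM.contDiff.comp hf))
  exact ⟨_, _, h.clm_comp Complex.reCLM⟩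

theorem exists_isEvenOddSplitting {V : Type*} [NormedAddCommGroup V] [NormedSpace ℝ V]
    [FiniteDimensional ℝ V] {γ : ℝ → V} (hγ : ContDiff ℝ ∞ γ) (hsupp : HasCompactSupport γ) :
    ∃ A B, IsEvenOddSplitting γ A B := by
  let b := Module.finBasis ℝ V
  let coord (i) : V →L[ℝ] ℝ := (b.coord i).toContinuousLinearMap
  have hcoord (i) := exists_isEvenOddSplitting_real (f := coord i ∘ γ) ((coord i).contDiff.comp hγ)
    (hsupp.comp_left (map_zero _))
  choose A B h using hcoord
  have hsum := IsEvenOddSplitting.sum fun i =>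
    (h i).clm_comp (ContinuousLinearMap.toSpanSingleton ℝ (b i))
  refine ⟨_, _, by convert hsum using 2 with x; simp [coord, b.sum_repr]⟩

end EvenOddSplitting

section PartialDerivatives

variable {V : Type*} [NormedAddCommGroup V] [NormedSpace ℝ V] {H : ℝ × ℝ → V}

/-- The partial derivative in the first variable. -/
def partialX (H : ℝ × ℝ → V) (p : ℝ × ℝ) : V := fderiv ℝ H p (1, 0)

/-- The partial derivative in the second variable. -/
def partialY (H : ℝ × ℝ → V) (p : ℝ × ℝ) : V := fderiv ℝ H p (0, 1)

theorem fderiv_eq_partialX_add_partialY (H : ℝ × ℝ → V) (p v : ℝ × ℝ) :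
    fderiv ℝ H p v = v.1 • partialX H p + v.2 • partialY H p := by
  rw [partialX, partialY, ← map_smul, ← map_smul, ← map_add]
  simp

theorem contDiff_partialX (hH : ContDiff ℝ ∞ H) : ContDiff ℝ ∞ (partialX H) :=
  (hH.fderiv_right le_rfl).clm_apply contDiff_const

theorem contDiff_partialY (hH : ContDiff ℝ ∞ H) : ContDiff ℝ ∞ (partialY H) :=
  (hH.fderiv_right le_rfl).clm_apply contDiff_const

theorem hasDerivAt_partialX {x y : ℝ} (hH : DifferentiableAt ℝ H (x, y)) :
    HasDerivAt (fun x => H (x, y)) (partialX H (x, y)) x :=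
  hH.hasFDerivAt.comp_hasDerivAt x ((hasDerivAt_id x).prodMk (hasDerivAt_const x y))

theorem hasDerivAt_partialY {x y : ℝ} (hH : DifferentiableAt ℝ H (x, y)) :
    HasDerivAt (fun y => H (x, y)) (partialY H (x, y)) y :=
  hH.hasFDerivAt.comp_hasDerivAt y ((hasDerivAt_const y x).prodMk (hasDerivAt_id y))

theorem hasDerivAt_mk_sq {x s : ℝ} (hH : DifferentiableAt ℝ H (x, s ^ 2)) :
    HasDerivAt (fun s => H (x, s ^ 2)) ((2 * s) • partialY H (x, s ^ 2)) s := by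
  have hy := hasDerivAt_partialY hH
  simpa only [hy.deriv] using hasDerivAt_comp_sq hy.differentiableAt

end PartialDerivatives

section TangentSplitting

variable {V : Type*} [NormedAddCommGroup V] [NormedSpace ℝ V] {γ : ℝ → V}

/-- The tangent surface `(t, s) ↦ γ t + s γ' t` of a curve `γ`. -/
def tangentSurface (γ : ℝ → V) (p : ℝ × ℝ) : V := γ p.1 + p.2 • deriv γ p.1

/-- In the sheared coordinates `x = t + s` the tangent surface of `γ` has no term of order one
in `s`; `E` collects the terms even in `s` and `s³ O` the odd ones, both smooth in `(x, s²)`. -/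
structure IsTangentSplitting (γ : ℝ → V) (E O : ℝ × ℝ → V) : Prop where
  contDiff_even : ContDiff ℝ ∞ E
  contDiff_odd : ContDiff ℝ ∞ O
  tangentSurface_eq (x s : ℝ) :
    tangentSurface γ (x - s, s) = E (x, s ^ 2) + s ^ 3 • O (x, s ^ 2)

namespace IsEvenOddSplitting

variable {A B : ℝ × ℝ → V}

theorem hasDerivAt_partialX_add (h : IsEvenOddSplitting γ A B) (x s : ℝ) :
    HasDerivAt γ (partialX A (x, s ^ 2) + s • partialX B (x, s ^ 2)) (x + s) := by
  have hA := hasDerivAt_partialX (h.contDiff_even.differentiable (by simp) (x, s ^ 2))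
  have hB := hasDerivAt_partialX (h.contDiff_odd.differentiable (by simp) (x, s ^ 2))
  have hγ : HasDerivAt (fun x => γ (x + s))
      (partialX A (x, s ^ 2) + s • partialX B (x, s ^ 2)) x := by
    simpa only [h.eq_add] using! hA.add (hB.const_smul s)
  simpa [Function.comp_def] using
    hγ.scomp_of_eq (x + s) ((hasDerivAt_id (x + s)).sub_const s) (by simp)

theorem deriv_eq_partialY (h : IsEvenOddSplitting γ A B) (x s : ℝ) : deriv γ (x + s) =
    (2 * s) • partialY A (x, s ^ 2) + B (x, s ^ 2) + (2 * s ^ 2) • partialY B (x, s ^ 2) := by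
  have hA := hasDerivAt_mk_sq (h.contDiff_even.differentiable (by simp) (x, s ^ 2))
  have hB := hasDerivAt_mk_sq (h.contDiff_odd.differentiable (by simp) (x, s ^ 2))
  have hsum := hA.add ((hasDerivAt_id s).smul hB)
  have hγ := (h.hasDerivAt_partialX_add x s).differentiableAt.hasDerivAt.comp_const_add x s
  rw [funext fun s => h.eq_add x s] at hγ
  rw [hγ.unique hsum]
  simp only [id]
  module

theorem partialX_even (h : IsEvenOddSplitting γ A B) (x s : ℝ) :
    partialX A (x, s ^ 2) = B (x, s ^ 2) + (2 * s ^ 2) • partialY B (x, s ^ 2) := by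
  have hpos := h.deriv_eq_partialY x s
  have hneg := h.deriv_eq_partialY x (-s)
  rw [(h.hasDerivAt_partialX_add x _).deriv] at hpos hneg
  rw [neg_sq] at hneg
  linear_combination (norm := module) (2⁻¹ : ℝ) • (hpos + hneg)

theorem isTangentSplitting (h : IsEvenOddSplitting γ A B) :
    IsTangentSplitting γ (fun p => A p - p.2 • partialX B p) (fun p => (2 : ℝ) • partialY B p) where
  contDiff_even := h.contDiff_even.sub (contDiff_snd.smul (contDiff_partialX h.contDiff_odd))
  contDiff_odd := contDiff_const.smul (contDiff_partialY h.contDiff_odd)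
  tangentSurface_eq x s := by
    have hγ := h.eq_add x (-s)
    have hγ' := (h.hasDerivAt_partialX_add x (-s)).deriv
    rw [neg_sq, ← sub_eq_add_neg] at hγ hγ'
    simp only [tangentSurface]
    rw [hγ, hγ', h.partialX_even]
    module

end IsEvenOddSplitting

namespace IsTangentSplitting

variable {E O : ℝ × ℝ → V}

theorem even_zero (h : IsTangentSplitting γ E O) (x : ℝ) : E (x, 0) = γ x := by
  simpa [tangentSurface] using (h.tangentSurface_eq x 0).symm

theorem contDiff_curve (h : IsTangentSplitting γ E O) : ContDiff ℝ ∞ γ := by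
  rw [← funext h.even_zero]
  exact h.contDiff_even.comp (contDiff_id.prodMk contDiff_const)

theorem partialX_even_zero (h : IsTangentSplitting γ E O) (x : ℝ) :
    partialX E (x, 0) = deriv γ x := by
  have hE := hasDerivAt_partialX (h.contDiff_even.differentiable (by simp) (x, 0))
  simp only [h.even_zero] at hE
  exact hE.deriv.symm

theorem neg_smul_deriv_deriv_eq (h : IsTangentSplitting γ E O) (x s : ℝ) :
    -s • deriv (deriv γ) (x - s) =
      (2 * s) • partialY E (x, s ^ 2) + (3 * s ^ 2) • O (x, s ^ 2) +
        (2 * s ^ 4) • partialY O (x, s ^ 2) := by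
  have hγ : ContDiff ℝ ∞ γ := h.contDiff_curve
  have hγ' : ContDiff ℝ ∞ (deriv γ) := (contDiff_infty_iff_deriv.1 hγ).2
  have hleft : HasDerivAt (fun s => tangentSurface γ (x - s, s)) _ s :=
    ((hγ.differentiable (by simp) _).hasDerivAt.comp_const_sub x s).add
      ((hasDerivAt_id s).smul ((hγ'.differentiable (by simp) _).hasDerivAt.comp_const_sub x s))
  have hE := hasDerivAt_mk_sq (h.contDiff_even.differentiable (by simp) (x, s ^ 2))
  have hO := hasDerivAt_mk_sq (h.contDiff_odd.differentiable (by simp) (x, s ^ 2))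
  have hright := hE.add ((hasDerivAt_pow 3 s).smul hO)
  rw [funext fun s => h.tangentSurface_eq x s] at hleft
  have heq := hleft.unique hright
  simp only [id] at heq
  push_cast at heq
  linear_combination (norm := module) heq

theorem neg_deriv_deriv_eq (h : IsTangentSplitting γ E O) (x s : ℝ) :
    -deriv (deriv γ) (x - s) =
      (2 : ℝ) • partialY E (x, s ^ 2) +
        s • ((3 : ℝ) • O (x, s ^ 2) + (2 * s ^ 2) • partialY O (x, s ^ 2)) := by
  have hγ'' : ContDiff ℝ ∞ (deriv (deriv γ)) :=
    (contDiff_infty_iff_deriv.1 (contDiff_infty_iff_deriv.1 h.contDiff_curve).2).2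
  have hcont := hγ''.continuous
  have hO := h.contDiff_odd.continuous
  have hEy := (contDiff_partialY h.contDiff_even).continuous
  have hOy := (contDiff_partialY h.contDiff_odd).continuous
  let k (s : ℝ) := (2 : ℝ) • partialY E (x, s ^ 2) +
    s • ((3 : ℝ) • O (x, s ^ 2) + (2 * s ^ 2) • partialY O (x, s ^ 2))
  suffices (fun s => -deriv (deriv γ) (x - s)) = k from congrFun this s
  refine Continuous.ext_on (dense_compl_singleton (0 : ℝ)) (by fun_prop) (by fun_prop)
    fun s (hs : s ≠ 0) => smul_right_injective V hs ?_
  simp only [k]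
  linear_combination (norm := module) h.neg_smul_deriv_deriv_eq x s

theorem partialY_even_zero (h : IsTangentSplitting γ E O) (x : ℝ) :
    partialY E (x, 0) = (-2⁻¹ : ℝ) • deriv (deriv γ) x := by
  have hzero := h.neg_deriv_deriv_eq x 0
  simp only [sub_zero, zero_pow two_ne_zero, zero_smul, add_zero] at hzero
  linear_combination (norm := module) (-2⁻¹ : ℝ) • hzero

theorem odd_zero (h : IsTangentSplitting γ E O) (x : ℝ) :
    O (x, 0) = (3⁻¹ : ℝ) • deriv (deriv (deriv γ)) x := by
  have hγ'' : ContDiff ℝ ∞ (deriv (deriv γ)) :=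
    (contDiff_infty_iff_deriv.1 (contDiff_infty_iff_deriv.1 h.contDiff_curve).2).2
  have hE := (contDiff_partialY h.contDiff_even).differentiable (by simp)
  have hO := h.contDiff_odd.differentiable (by simp)
  have hOy := (contDiff_partialY h.contDiff_odd).differentiable (by simp)
  have hk : Differentiable ℝ fun s : ℝ =>
      (3 : ℝ) • O (x, s ^ 2) + (2 * s ^ 2) • partialY O (x, s ^ 2) := by fun_prop
  have hleft := ((hγ''.differentiable (by simp) (x - 0)).hasDerivAt.comp_const_sub x 0).neg
  have hright := ((hasDerivAt_mk_sq (hE (x, 0 ^ 2))).const_smul (2 : ℝ)).add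
    ((hasDerivAt_id 0).smul (hk 0).hasDerivAt)
  have heq := hleft.unique
    (hright.congr_of_eventuallyEq (.of_forall (h.neg_deriv_deriv_eq x)))
  simp only [sub_zero, neg_neg, mul_zero, ne_eq, OfNat.ofNat_ne_zero, not_false_eq_true, zero_pow,
    zero_smul, smul_zero, id_eq, add_zero, one_smul, zero_add] at heq
  linear_combination (norm := module) -(3⁻¹ : ℝ) • heq

end IsTangentSplitting

end TangentSplitting

section LocalDiffeomorphisms

variable {E F : Type*} [NormedAddCommGroup E] [NormedSpace ℝ E] [NormedAddCommGroup F]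
  [NormedSpace ℝ F]

namespace SmoothDiffeoOn

variable {σ : E → F} {U : Set E}

theorem mono (h : SmoothDiffeoOn σ U) {U' : Set E} (hU' : IsOpen U') (hsub : U' ⊆ U) :
    SmoothDiffeoOn σ U' := by
  obtain ⟨-, hopen, hσ, σinv, hσinv, hleft⟩ := h
  have himage : σ '' U' = σ '' U ∩ σinv ⁻¹' U' := by
    ext y
    constructor
    · rintro ⟨x, hx, rfl⟩
      exact ⟨mem_image_of_mem σ (hsub hx), by rwa [mem_preimage, hleft x (hsub hx)]⟩
    · rintro ⟨⟨x, hx, rfl⟩, hx'⟩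
      rw [mem_preimage, hleft x hx] at hx'
      exact mem_image_of_mem σ hx'
  refine ⟨hU', ?_, hσ.mono hsub, σinv, hσinv.mono (image_mono hsub), fun x hx => hleft x (hsub hx)⟩
  rw [himage]
  exact hσinv.continuousOn.isOpen_inter_preimage hopen hU'

theorem exists_inverse (h : SmoothDiffeoOn σ U) :
    ∃ τ : F → E, SmoothDiffeoOn τ (σ '' U) ∧ ∀ x ∈ U, τ (σ x) = x := by
  obtain ⟨hU, hopen, hσ, τ, hτ, hleft⟩ := h
  have himage : τ '' (σ '' U) = U := by
    rw [image_image, image_congr hleft, image_id']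
  refine ⟨τ, ⟨hopen, himage.symm ▸ hU, hτ, σ, himage.symm ▸ hσ, ?_⟩, hleft⟩
  rintro _ ⟨x, hx, rfl⟩
  rw [hleft x hx]

end SmoothDiffeoOn

theorem exists_smoothDiffeoOn_of_hasFDerivAt_equiv [CompleteSpace E] {Φ : E → F}
    (hΦ : ContDiff ℝ ∞ Φ) {a : E} {L : E ≃L[ℝ] F} (hL : HasFDerivAt Φ (L : E →L[ℝ] F) a) :
    ∃ U, a ∈ U ∧ SmoothDiffeoOn Φ U := by
  let e := hΦ.contDiffAt.toOpenPartialHomeomorph Φ hL (by simp)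
  let U : Set E := e.source ∩ fderiv ℝ Φ ⁻¹' range ((↑) : (E ≃L[ℝ] F) → E →L[ℝ] F)
  have hU : IsOpen U := e.open_source.inter
    (ContinuousLinearEquiv.isOpen.preimage (hΦ.continuous_fderiv (by simp)))
  refine ⟨U, ⟨hΦ.contDiffAt.mem_toOpenPartialHomeomorph_source hL (by simp), L, hL.fderiv.symm⟩,
    hU, e.isOpen_image_of_subset_source hU inter_subset_left, hΦ.contDiffOn, e.symm, ?_,
    fun x hx => e.left_inv hx.1⟩
  rintro _ ⟨x, ⟨hx, L', hL'⟩, rfl⟩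
  refine (e.contDiffAt_symm (f₀' := L') (e.map_source hx) ?_ hΦ.contDiffAt).contDiffWithinAt
  rw [hL', e.left_inv hx]
  exact (hΦ.differentiable (by simp) x).hasFDerivAt

theorem germDiffeomorphic_of_eventuallyEq {f g : E → F} {σ : E → E} {Φ : F → F} {U : Set E}
    {W : Set F} {p : E} (hσ : SmoothDiffeoOn σ U) (hp : p ∈ U) (hg : ContinuousAt g (σ p))
    (hΦ : SmoothDiffeoOn Φ W) (hgp : g (σ p) ∈ W) (hf : f =ᶠ[𝓝 p] Φ ∘ g ∘ σ) :
    GermDiffeomorphic f p g (σ p) := by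
  obtain ⟨τ, hτ, hleft⟩ := hΦ.exists_inverse
  have hσp : ContinuousAt σ p := hσ.2.2.1.continuousOn.continuousAt (hσ.1.mem_nhds hp)
  have hW : ∀ᶠ x in 𝓝 p, g (σ x) ∈ W := (hg.comp hσp).eventually (hΦ.1.mem_nhds hgp)
  obtain ⟨U', hU', hopen, hpU'⟩ :=
    eventually_nhds_iff.1 (hf.and (hW.and (hσ.1.eventually_mem hp)))
  have hfx (x) (hx : x ∈ U') : f x = Φ (g (σ x)) := (hU' x hx).1
  have hgx (x) (hx : x ∈ U') : g (σ x) ∈ W := (hU' x hx).2.1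
  have hmem (x) (hx : x ∈ U') : f x ∈ Φ '' W := ⟨g (σ x), hgx x hx, (hfx x hx).symm⟩
  have hτf (x) (hx : x ∈ U') : τ (f x) = g (σ x) := by rw [hfx x hx, hleft _ (hgx x hx)]
  exact ⟨U', Φ '' W, σ, τ, hσ.mono hopen fun x hx => (hU' x hx).2.2, hτ, hpU', hmem p hpU', rfl,
    hτf p hpU', hmem, hτf⟩

end LocalDiffeomorphisms

section CuspidalEdge

theorem exists_linearEquiv_apply_eq {𝕜 V ι : Type*} [DivisionRing 𝕜] [AddCommGroup V] [Module 𝕜 V]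
    [Finite ι] {e v : ι → V} (he : LinearIndependent 𝕜 e) (hv : LinearIndependent 𝕜 v) :
    ∃ L : V ≃ₗ[𝕜] V, ∀ i, L (e i) = v i := by
  have := FiniteDimensional.span_of_finite 𝕜 (finite_range e)
  obtain ⟨L, hL⟩ := Submodule.exists_linearEquiv_restrict_eq
    ((Module.Basis.span he).equiv (Module.Basis.span hv) (Equiv.refl ι))
  refine ⟨L, fun i => ?_⟩
  have hi := hL (Module.Basis.span he i)
  rwa [Module.Basis.equiv_apply, Equiv.refl_apply, Module.Basis.span_apply,
    Module.Basis.span_apply, eq_comm] at hi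

theorem exists_clm_apply_sum_smul_eq {V ι : Type*} [NormedAddCommGroup V]
    [NormedSpace ℝ V] [FiniteDimensional ℝ V] [Fintype ι] {e : ι → V} (he : LinearIndependent ℝ e) :
    ∃ c : V →L[ℝ] ι → ℝ, ∀ a : ι → ℝ, c (∑ i, a i • e i) = a := by
  obtain ⟨c, hc⟩ := (Fintype.linearCombination ℝ e).exists_leftInverse_of_injective
    (LinearMap.ker_eq_bot.2 (linearIndependent_iff_injective_fintypeLinearCombination.1 he))
  exact ⟨c.toContinuousLinearMap, fun a => LinearMap.congr_fun hc a⟩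

variable {V : Type*} [NormedAddCommGroup V] [NormedSpace ℝ V]

/-- The cuspidal edge `(u, w) ↦ (u, w², w³)` in the space spanned by `e 0`, `e 1`, `e 2`. -/
def cuspidalEdge (e : Fin 3 → V) (p : ℝ × ℝ) : V := ∑ i, ![p.1, p.2 ^ 2, p.2 ^ 3] i • e i

theorem continuous_cuspidalEdge (e : Fin 3 → V) : Continuous (cuspidalEdge e) := by
  unfold cuspidalEdge
  simp only [Fin.sum_univ_three, Fin.isValue, Matrix.cons_val]
  fun_prop

theorem cuspidalEdge_zero (e : Fin 3 → V) : cuspidalEdge e (0, 0) = 0 := by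
  simp [cuspidalEdge, Fin.sum_univ_three]

variable [FiniteDimensional ℝ V] {E O : ℝ × ℝ → V}

theorem hasFDerivAt_cuspidalEdgeChart (hE : Differentiable ℝ E) (hO : Differentiable ℝ O) (x₀ : ℝ)
    (c : V →L[ℝ] Fin 3 → ℝ) (R : V →L[ℝ] V) :
    HasFDerivAt
      (fun z => E (x₀ + c z 0, c z 1) + c z 2 • O (x₀ + c z 0, c z 1) + R z)
      (Fintype.linearCombination ℝ ![partialX E (x₀, 0), partialY E (x₀, 0), O (x₀, 0)] ∘ₗ
        c.toLinearMap + R.toLinearMap).toContinuousLinearMap 0 := by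
  let c' (i) : V →L[ℝ] ℝ := (ContinuousLinearMap.proj i).comp c
  have hc (i) : HasFDerivAt (fun z => c z i) (c' i) 0 := (c' i).hasFDerivAt
  have hpoint : HasFDerivAt (fun z => (x₀ + c z 0, c z 1)) ((c' 0).prod (c' 1)) 0 :=
    ((hc 0).const_add x₀).prodMk (hc 1)
  have hE' := (hE _).hasFDerivAt.comp 0 hpoint
  have hO' := (hO _).hasFDerivAt.comp 0 hpoint
  refine ((hE'.add ((hc 2).smul hO')).add R.hasFDerivAt).congr_fderiv ?_
  ext z
  simp [Fintype.linearCombination_apply, Fin.sum_univ_three, fderiv_eq_partialX_add_partialY, c']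

theorem exists_smoothDiffeoOn_comp_cuspidalEdge (hE : ContDiff ℝ ∞ E) (hO : ContDiff ℝ ∞ O)
    {x₀ : ℝ} (hv : LinearIndependent ℝ ![partialX E (x₀, 0), partialY E (x₀, 0), O (x₀, 0)])
    {e : Fin 3 → V} (he : LinearIndependent ℝ e) :
    ∃ (Φ : V → V) (W : Set V), SmoothDiffeoOn Φ W ∧ 0 ∈ W ∧ ∀ u w,
      Φ (cuspidalEdge e (u, w)) = E (x₀ + u, w ^ 2) + w ^ 3 • O (x₀ + u, w ^ 2) := by
  set v := ![partialX E (x₀, 0), partialY E (x₀, 0), O (x₀, 0)]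
  obtain ⟨L, hL⟩ := exists_linearEquiv_apply_eq he hv
  obtain ⟨c, hc⟩ := exists_clm_apply_sum_smul_eq he
  -- `R` vanishes on the span of `e` and completes the derivative of `Φ` at `0` to `L`.
  let R : V →L[ℝ] V :=
    (L.toLinearMap - Fintype.linearCombination ℝ v ∘ₗ c.toLinearMap).toContinuousLinearMap
  let Φ (z : V) : V := E (x₀ + c z 0, c z 1) + c z 2 • O (x₀ + c z 0, c z 1) + R z
  have hcoord (i) : ContDiff ℝ ∞ fun z => c z i :=
    ((ContinuousLinearMap.proj (R := ℝ) i).comp c).contDiff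
  have hpoint : ContDiff ℝ ∞ fun z => (x₀ + c z 0, c z 1) :=
    (contDiff_const.add (hcoord 0)).prodMk (hcoord 1)
  have hΦ : ContDiff ℝ ∞ Φ :=
    ((hE.comp hpoint).add ((hcoord 2).smul (hO.comp hpoint))).add R.contDiff
  have hderiv : HasFDerivAt Φ (L.toContinuousLinearEquiv : V →L[ℝ] V) 0 := by
    refine (hasFDerivAt_cuspidalEdgeChart (hE.differentiable (by simp))
      (hO.differentiable (by simp)) x₀ c R).congr_fderiv ?_
    ext z
    simp [R, v]
  obtain ⟨W, h0, hW⟩ := exists_smoothDiffeoOn_of_hasFDerivAt_equiv hΦ hderiv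
  refine ⟨Φ, W, hW, h0, fun u w => ?_⟩
  have hR : R (cuspidalEdge e (u, w)) = 0 := by
    simp only [R, LinearMap.coe_toContinuousLinearMap', LinearMap.sub_apply, LinearMap.comp_apply,
      ContinuousLinearMap.coe_coe, LinearEquiv.coe_coe]
    rw [cuspidalEdge, hc, map_sum, Fintype.linearCombination_apply, sub_eq_zero]
    simp only [map_smul, hL]
  simp only [Φ]
  rw [hR, cuspidalEdge, hc]
  simp

end CuspidalEdge

theorem exists_contDiff_hasCompactSupport_eventuallyEq {E V : Type*} [NormedAddCommGroup E]
    [NormedSpace ℝ E] [FiniteDimensional ℝ E] [HasContDiffBump E] [NormedAddCommGroup V]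
    [NormedSpace ℝ V] {U : Set E} (hU : IsOpen U) {f : E → V} (hf : ContDiffOn ℝ ∞ f U)
    {x₀ : E} (hx₀ : x₀ ∈ U) :
    ∃ g : E → V, ContDiff ℝ ∞ g ∧ HasCompactSupport g ∧ f =ᶠ[𝓝 x₀] g := by
  obtain ⟨ε, hε, hball⟩ := Metric.nhds_basis_closedBall.mem_iff.1 (hU.mem_nhds hx₀)
  let χ : ContDiffBump x₀ := ⟨ε / 2, ε, half_pos hε, half_lt_self hε⟩
  refine ⟨fun x => χ x • f x, contMDiff_iff_contDiff.1 (contMDiff_of_tsupport fun x hx => ?_),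
    χ.hasCompactSupport.smul_right, ?_⟩
  · have hxU : x ∈ U := hball (χ.tsupport_eq ▸ tsupport_smul_subset_left _ _ hx)
    exact (χ.contDiff.contDiffAt.smul (hf.contDiffAt (hU.mem_nhds hxU))).contMDiffAt
  · filter_upwards [χ.eventuallyEq_one] with x hx
    simp [hx]

theorem smoothDiffeoOn_shear (t₀ : ℝ) :
    SmoothDiffeoOn (fun p : ℝ × ℝ => (p.1 + p.2 - t₀, p.2)) univ := by
  have himage : (fun p : ℝ × ℝ => (p.1 + p.2 - t₀, p.2)) '' univ = univ :=
    image_univ_of_surjective fun p => ⟨(p.1 - p.2 + t₀, p.2), Prod.ext (by ring) rfl⟩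
  refine ⟨isOpen_univ, himage.symm ▸ isOpen_univ, ContDiff.contDiffOn (by fun_prop),
    fun p => (p.1 - p.2 + t₀, p.2), ContDiff.contDiffOn (by fun_prop),
    fun p _ => Prod.ext (by ring) rfl⟩

section TangentSurface

variable {V : Type*} [NormedAddCommGroup V] [NormedSpace ℝ V]

theorem tangentSurface_eventuallyEq {γ δ : ℝ → V} {t₀ : ℝ} (h : γ =ᶠ[𝓝 t₀] δ) (s₀ : ℝ) :
    tangentSurface γ =ᶠ[𝓝 (t₀, s₀)] tangentSurface δ := by
  have hfst : Tendsto Prod.fst (𝓝 (t₀, s₀)) (𝓝 t₀) := continuous_fst.tendsto _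
  filter_upwards [hfst.eventually h, hfst.eventually h.deriv] with p hp hp'
  simp only [tangentSurface, hp, hp']

theorem IsTangentSplitting.linearIndependent {γ : ℝ → V} {E O : ℝ × ℝ → V}
    (h : IsTangentSplitting γ E O) {t₀ : ℝ}
    (hind : LinearIndependent ℝ ![deriv γ t₀, deriv (deriv γ) t₀, deriv (deriv (deriv γ)) t₀]) :
    LinearIndependent ℝ ![partialX E (t₀, 0), partialY E (t₀, 0), O (t₀, 0)] := by
  rw [h.partialX_even_zero, h.partialY_even_zero, h.odd_zero]
  convert! hind.units_smul ![1, Units.mk0 (-2⁻¹) (by norm_num), Units.mk0 3⁻¹ (by norm_num)] using 1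
  ext i
  fin_cases i <;> simp [Units.smul_def]

theorem euclidean_tangent_surface_cuspidal_edge_general [FiniteDimensional ℝ V] {I : Set ℝ}
    (hI : IsOpen I) {γ : ℝ → V} (hγ : ContDiffOn ℝ ∞ γ I) {t₀ : ℝ} (ht₀ : t₀ ∈ I)
    (hind : LinearIndependent ℝ ![deriv γ t₀, deriv (deriv γ) t₀, deriv (deriv (deriv γ)) t₀])
    {e : Fin 3 → V} (he : LinearIndependent ℝ e) :
    GermDiffeomorphic (tangentSurface γ) (t₀, 0) (cuspidalEdge e) (0, 0) := by
  obtain ⟨δ, hδ, hδsupp, hγδ⟩ := exists_contDiff_hasCompactSupport_eventuallyEq hI hγ ht₀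
  obtain ⟨A, B, hAB⟩ := exists_isEvenOddSplitting hδ hδsupp
  have hsplit := hAB.isTangentSplitting
  have hind' : LinearIndependent ℝ
      ![deriv δ t₀, deriv (deriv δ) t₀, deriv (deriv (deriv δ)) t₀] := by
    rwa [← hγδ.deriv_eq, ← hγδ.deriv.deriv_eq, ← hγδ.deriv.deriv.deriv_eq]
  obtain ⟨Φ, W, hΦ, h0, hΦ_eq⟩ := exists_smoothDiffeoOn_comp_cuspidalEdge hsplit.contDiff_even
    hsplit.contDiff_odd (hsplit.linearIndependent hind') he
  have hδΦ : tangentSurface δ = Φ ∘ cuspidalEdge e ∘ fun p => (p.1 + p.2 - t₀, p.2) := by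
    funext p
    simp [hΦ_eq, ← hsplit.tangentSurface_eq]
  have hσ : (t₀ + 0 - t₀, (0 : ℝ)) = (0, 0) := by simp
  rw [← hσ]
  refine germDiffeomorphic_of_eventuallyEq (smoothDiffeoOn_shear t₀) (mem_univ _)
    (continuous_cuspidalEdge e).continuousAt hΦ ?_
    (hδΦ ▸ tangentSurface_eventuallyEq hγδ 0)
  simpa [cuspidalEdge_zero] using h0

end TangentSurface

theorem cuspidalEdge_single_castLE {m : ℕ} (hm : 3 ≤ m) (p : ℝ × ℝ) :
    cuspidalEdge (fun i => Pi.single (Fin.castLE hm i) 1) p = fun j : Fin m =>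
      if j.val = 0 then p.1
      else if j.val = 1 then p.2 ^ 2
      else if j.val = 2 then p.2 ^ 3
      else 0 := by
  funext j
  simp only [cuspidalEdge, Finset.sum_apply, Pi.smul_apply, Pi.single_apply, Fin.ext_iff,
    Fin.val_castLE, smul_eq_mul, mul_ite, mul_one, mul_zero, Fin.sum_univ_three,
    Fin.coe_ofNat_eq_mod, Nat.zero_mod, Nat.one_mod, Nat.mod_succ, Matrix.cons_val]
  split_ifs <;> simp_all

/-- For `m ≥ 3` and a `C^∞` curve `γ : I → ℝ^m` on an open interval, if
`γ'(t₀), γ''(t₀), γ'''(t₀)` are linearly independent, then the tangent surface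
`f(t,s) = γ(t) + s γ'(t)` is, as a germ at `(t₀, 0)`, diffeomorphic to the cuspidal
edge `(u,w) ↦ (u, w², w³, 0, …, 0)`. -/
theorem euclidean_tangent_surface_cuspidal_edge (m : ℕ) (hm : 3 ≤ m)
    (I : Set ℝ) (hI : IsOpen I) (hI' : I.OrdConnected)
    (γ : ℝ → Fin m → ℝ) (hγ : ContDiffOn ℝ (⊤ : ℕ∞) γ I)
    (t₀ : ℝ) (ht₀ : t₀ ∈ I)
    (hind : LinearIndependent ℝ
      ![deriv γ t₀, deriv (deriv γ) t₀, deriv (deriv (deriv γ)) t₀]) :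
    GermDiffeomorphic
      (fun p : ℝ × ℝ => γ p.1 + p.2 • deriv γ p.1) (t₀, (0 : ℝ))
      (fun p : ℝ × ℝ => fun j : Fin m =>
        if j.val = 0 then p.1
        else if j.val = 1 then p.2 ^ 2
        else if j.val = 2 then p.2 ^ 3
        else 0)
      ((0 : ℝ), (0 : ℝ)) := by
  have he : LinearIndependent ℝ fun i => (Pi.single (Fin.castLE hm i) 1 : Fin m → ℝ) := by
    simpa [Function.comp_def] using
      (Pi.basisFun ℝ (Fin m)).linearIndependent.comp _ (Fin.castLE_injective hm)
  rw [← funext (cuspidalEdge_single_castLE hm)]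
  exact euclidean_tangent_surface_cuspidal_edge_general hI hγ ht₀ hind he
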